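/- For every function f in the weighted space L²(ℝⁿ, e^{-|x|²}) and every real constant a, there exists a weak solution u ∈ L²(ℝⁿ, e^{-|x|²}) of the equation Δu + au = f on ℝⁿ satisfying the estimate ∫_{ℝⁿ} u² e^{-|x|²} dx ≤ (1/(8n)) ∫_{ℝⁿ} f² e^{-|x|²} dx. -/

import Mathlib

open MeasureTheory Real

noncomputable def lap {n : ℕ} (f : EuclideanSpace ℝ (Fin n) → ℝ)
    (x : EuclideanSpace ℝ (Fin n)) : ℝ :=
  ∑ i : Fin n, fderiv ℝ (fun y => fderiv ℝ f y (EuclideanSpace.single i 1)) x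
    (EuclideanSpace.single i 1)

/-- `u` is a weak solution of `Δu + a u = f` on `ℝⁿ`. -/
def IsWeakSolution {n : ℕ} (a : ℝ) (u f : EuclideanSpace ℝ (Fin n) → ℝ) : Prop :=
  ∀ ψ : EuclideanSpace ℝ (Fin n) → ℝ, ContDiff ℝ (⊤ : ℕ∞) ψ → HasCompactSupport ψ →
    ∫ x, u x * (lap ψ x + a * ψ x) = ∫ x, f x * ψ x

open scoped ContDiff

abbrev EE (n : ℕ) := EuclideanSpace ℝ (Fin n)

/-- Partial derivative. -/
noncomputable def pd {n : ℕ} (i : Fin n) (f : EE n → ℝ) (x : EE n) : ℝ :=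
  fderiv ℝ f x (EuclideanSpace.single i 1)

/-- Test functions. -/
def TF {n : ℕ} (v : EE n → ℝ) : Prop := ContDiff ℝ ∞ v ∧ HasCompactSupport v

/-- Integrable with zero integral. -/
def NI {n : ℕ} (f : EE n → ℝ) : Prop := Integrable f volume ∧ ∫ x, f x = 0

section calc_lemmas
variable {n : ℕ}

lemma smooth_pd {v : EE n → ℝ} (hv : ContDiff ℝ ∞ v) (i : Fin n) : ContDiff ℝ ∞ (pd i v) := by
  unfold pd
  exact (hv.fderiv_right (m := ∞) (by simp)).clm_apply contDiff_const

lemma TF.pd {v : EE n → ℝ} (hv : TF v) (i : Fin n) : TF (pd i v) :=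
  ⟨smooth_pd hv.1 i, hv.2.fderiv_apply ℝ _⟩

lemma TF.diff {v : EE n → ℝ} (hv : TF v) (x : EE n) : DifferentiableAt ℝ v x :=
  hv.1.differentiable (by simp) x

lemma TF.mul {v g : EE n → ℝ} (hv : TF v) (hg : ContDiff ℝ ∞ g) : TF (fun x => g x * v x) :=
  ⟨hg.mul hv.1, hv.2.mul_left⟩

lemma TF.add {v g : EE n → ℝ} (hv : TF v) (hg : TF g) : TF (fun x => v x + g x) :=
  ⟨hv.1.add hg.1, hv.2.add hg.2⟩

lemma TF.sub {v g : EE n → ℝ} (hv : TF v) (hg : TF g) : TF (fun x => v x - g x) := by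
  have := hv.add (hg.mul (g := fun _ => -1) contDiff_const)
  simpa [sub_eq_add_neg] using this

lemma TF.zero : TF (fun _ : EE n => (0 : ℝ)) := ⟨contDiff_const, HasCompactSupport.zero⟩

lemma TF.sum {m : ℕ} {f : Fin m → EE n → ℝ} (hf : ∀ i, TF (f i)) :
    TF (fun x => ∑ i, f i x) := by
  induction m with
  | zero => simpa using TF.zero
  | succ k ih =>
    simp only [Fin.sum_univ_succ]
    exact (hf 0).add (ih fun i => hf i.succ)

lemma TF.integrable {v : EE n → ℝ} (hv : TF v) : Integrable v volume :=
  hv.1.continuous.integrable_of_hasCompactSupport hv.2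

lemma TF.ni {v : EE n → ℝ} (hv : TF v) (i : Fin n) : NI (_root_.pd i v) := by
  refine ⟨(hv.pd i).integrable, ?_⟩
  have := integral_mul_fderiv_eq_neg_fderiv_mul_of_integrable (𝕜 := ℝ) (μ := (volume : Measure (EE n)))
    (f := fun _ => (1:ℝ)) (g := v) (v := EuclideanSpace.single i 1)
    (by simp) (by simpa [_root_.pd] using! (hv.pd i).integrable) (by simpa using hv.integrable)
    (fun x _ => differentiableAt_const _) (fun x _ => hv.diff x)
  simpa [_root_.pd] using this

lemma NI.add {f g : EE n → ℝ} (hf : NI f) (hg : NI g) : NI (fun x => f x + g x) :=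
  ⟨hf.1.add hg.1, by rw [integral_add hf.1 hg.1, hf.2, hg.2, add_zero]⟩

lemma NI.cmul {f : EE n → ℝ} (hf : NI f) (c : ℝ) : NI (fun x => c * f x) :=
  ⟨hf.1.const_mul c, by rw [integral_const_mul, hf.2, mul_zero]⟩

lemma NI.sum {ι : Type*} (s : Finset ι) {f : ι → EE n → ℝ} (hf : ∀ i, NI (f i)) :
    NI (fun x => ∑ i ∈ s, f i x) :=
  ⟨integrable_finsetSum _ fun i _ => (hf i).1, by
    rw [integral_finsetSum _ fun i _ => (hf i).1]
    exact Finset.sum_eq_zero fun i _ => (hf i).2⟩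

lemma pd_mul {f g : EE n → ℝ} {x : EE n} (i : Fin n) (hf : DifferentiableAt ℝ f x)
    (hg : DifferentiableAt ℝ g x) :
    pd i (fun y => f y * g y) x = pd i f x * g x + f x * pd i g x := by
  unfold pd
  rw [fderiv_fun_mul hf hg]
  simp
  ring

lemma pd_add {f g : EE n → ℝ} {x : EE n} (i : Fin n) (hf : DifferentiableAt ℝ f x)
    (hg : DifferentiableAt ℝ g x) :
    pd i (fun y => f y + g y) x = pd i f x + pd i g x := by
  unfold pd
  rw [fderiv_fun_add hf hg]
  simp

lemma smooth_coord (j : Fin n) : ContDiff ℝ ∞ (fun y : EE n => y j) :=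
  (EuclideanSpace.proj (𝕜 := ℝ) j).contDiff

lemma diff_coord (j : Fin n) (x : EE n) : DifferentiableAt ℝ (fun y : EE n => y j) x :=
  (EuclideanSpace.proj (𝕜 := ℝ) j).differentiableAt

lemma pd_coord (i j : Fin n) (x : EE n) :
    pd i (fun y : EE n => y j) x = if i = j then 1 else 0 := by
  unfold pd
  have : (fun y : EE n => y j) = EuclideanSpace.proj (𝕜 := ℝ) j := rfl
  rw [this, ContinuousLinearMap.fderiv]
  simp [eq_comm]

lemma pd_const (i : Fin n) (c : ℝ) (x : EE n) : pd i (fun _ : EE n => c) x = 0 := by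
  simp [pd]

lemma pd_comm {v : EE n → ℝ} (hv : ContDiff ℝ ∞ v) (i j : Fin n) (x : EE n) :
    pd i (pd j v) x = pd j (pd i v) x := by
  have hs : IsSymmSndFDerivAt ℝ v x :=
    hv.contDiffAt.isSymmSndFDerivAt (by simp; exact WithTop.coe_le_coe.2 le_top)
  have hd : DifferentiableAt ℝ (fderiv ℝ v) x :=
    (hv.fderiv_right (m := ∞) (by simp)).differentiable (by simp) x
  have key : ∀ a b : Fin n, pd a (pd b v) x
      = fderiv ℝ (fderiv ℝ v) x (EuclideanSpace.single a 1) (EuclideanSpace.single b 1) := by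
    intro a b
    unfold pd
    rw [fderiv_clm_apply hd (differentiableAt_const _)]
    simp
  rw [key, key]
  exact hs _ _

/-- Pointwise divergence identities, all packaged as null-integral functions. -/
lemma id_M {v : EE n → ℝ} (hv : TF v) (j : Fin n) :
    NI (fun x => v x * (2 * x j * pd j v x + v x)) := by
  have h : TF (fun x => x j * (v x * v x)) := (hv.mul hv.1).mul (smooth_coord j)
  convert h.ni j using 2 with x
  rw [pd_mul j (diff_coord j x) ((hv.diff x).fun_mul (hv.diff x)),
    pd_mul j (hv.diff x) (hv.diff x), pd_coord]
  simp
  ring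

lemma id_K {v : EE n → ℝ} (hv : TF v) (i j : Fin n) :
    NI (fun x => x i ^ 2 * v x * (2 * x j * pd j v x + v x)
      + (if i = j then 2 * (x i * v x) ^ 2 else 0)) := by
  have hw : TF (fun x => x i * v x) := hv.mul (smooth_coord i)
  convert id_M hw j using 2 with x
  rw [pd_mul j (diff_coord i x) (hv.diff x), pd_coord]
  by_cases hij : i = j
  · subst hij
    simp
    ring
  · simp [hij, Ne.symm hij]
    ring

lemma id_G {v : EE n → ℝ} (hv : TF v) (i j : Fin n) :
    NI (fun x => pd i (pd i v) x * (2 * x j * pd j v x + v x)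
      + (if i = j then 2 * (pd i v x) ^ 2 else 0)) := by
  have hH := id_M (hv.pd i) j
  have h2 : ContDiff ℝ ∞ (fun x : EE n => 2 * x j) := contDiff_const.mul (smooth_coord j)
  have hc : TF (fun x => (2 * x j) * pd j v x) := (hv.pd j).mul h2
  have hG0 : ContDiff ℝ ∞ (fun x => (2 * x j) * pd j v x + v x) := hc.1.add hv.1
  have hG : TF (fun x => ((2 * x j) * pd j v x + v x) * pd i v x) := (hv.pd i).mul hG0
  have := (hG.ni i).add (hH.cmul (-1))
  convert this using 2 with x
  have hd2 : DifferentiableAt ℝ (fun x : EE n => 2 * x j) x := h2.differentiable (by simp) x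
  rw [pd_mul i (hG0.differentiable (by simp) x) ((hv.pd i).diff x),
    pd_add i (hc.diff x) (hv.diff x), pd_mul i hd2 ((hv.pd j).diff x),
    pd_mul i (differentiableAt_const _) (diff_coord j x), pd_coord, pd_const,
    pd_comm hv.1 i j]
  by_cases hij : i = j
  · subst hij
    simp
    ring
  · simp [hij]
    ring

lemma main_ineq {v : EE n → ℝ} (hv : TF v) (a : ℝ) :
    8 * n * ∫ x, v x ^ 2 ≤ ∫ x, (∑ i, (pd i (pd i v) x + x i ^ 2 * v x) + a * v x
      - ∑ j, (2 * x j * pd j v x + v x)) ^ 2 := by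
  have hR := ((NI.sum Finset.univ fun i => NI.sum Finset.univ fun j =>
    ((id_G hv i j).add (id_K hv i j)).cmul (-4)).add
    (NI.sum Finset.univ fun j => (id_M hv j).cmul (-4 * a - 8)))
  have hsq : TF (fun x => v x * v x) := hv.mul hv.1
  have hsqi : Integrable (fun x => v x ^ 2) volume := by
    simpa only [sq] using hsq.integrable
  have hP0 : TF (fun x => ∑ i, (pd i (pd i v) x + x i ^ 2 * v x) + a * v x
      - ∑ j, (2 * x j * pd j v x + v x)) := by
    refine TF.sub (TF.add (TF.sum fun i => TF.add ((hv.pd i).pd i)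
      (hv.mul ((smooth_coord i).pow 2))) (hv.mul contDiff_const)) (TF.sum fun j => TF.add
      ((hv.pd j).mul (contDiff_const.mul (smooth_coord j))) hv)
  have hP : Integrable (fun x => (∑ i, (pd i (pd i v) x + x i ^ 2 * v x) + a * v x
      - ∑ j, (2 * x j * pd j v x + v x)) ^ 2) volume := by
    simpa only [sq] using (hP0.mul hP0.1).integrable
  calc _ = ∫ x, (8 * n * v x ^ 2 + _) := by
        rw [integral_add (hsqi.const_mul _) hR.1, hR.2, add_zero, integral_const_mul]
    _ ≤ _ := by
        refine integral_mono ((hsqi.const_mul _).add hR.1) hP fun x => ?_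
        have h1 : ∑ i : Fin n, ∑ j : Fin n, (-4) * (pd i (pd i v) x * (2 * x j * pd j v x + v x)
            + (if i = j then 2 * (pd i v x) ^ 2 else 0)
            + (x i ^ 2 * v x * (2 * x j * pd j v x + v x)
            + (if i = j then 2 * (x i * v x) ^ 2 else 0)))
            = -4 * ((∑ i, (pd i (pd i v) x + x i ^ 2 * v x)) * ∑ j, (2 * x j * pd j v x + v x))
             - 8 * ∑ i, ((pd i v x) ^ 2 + (x i * v x) ^ 2) := by
          rw [Finset.sum_mul_sum, Finset.mul_sum, Finset.mul_sum, ← Finset.sum_sub_distrib]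
          refine Finset.sum_congr rfl fun i _ => ?_
          rw [← Finset.mul_sum]
          simp only [Finset.sum_add_distrib, Finset.sum_ite_eq, Finset.mem_univ, if_true, add_mul]
          ring
        have h2 : ∑ j : Fin n, (-4 * a - 8) * (v x * (2 * x j * pd j v x + v x))
            = (-4 * a - 8) * (v x * ∑ j, (2 * x j * pd j v x + v x)) := by
          simp only [Finset.mul_sum]
        have h3 : 0 ≤ ∑ i, (pd i v x + x i * v x) ^ 2 := Finset.sum_nonneg fun i _ => sq_nonneg _
        have h4 : ∑ i, (pd i v x + x i * v x) ^ 2 = ∑ i, ((pd i v x) ^ 2 + (x i * v x) ^ 2)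
            + v x * ∑ j, (2 * x j * pd j v x + v x) - n * v x ^ 2 := by
          have : (n : ℝ) * v x ^ 2 = ∑ i : Fin n, v x ^ 2 := by simp
          rw [this, Finset.mul_sum, ← Finset.sum_add_distrib, ← Finset.sum_sub_distrib]
          exact Finset.sum_congr rfl fun i _ => by ring
        simp only [h1, h2]
        rw [h4] at h3
        nlinarith [sq_nonneg (∑ i, (pd i (pd i v) x + x i ^ 2 * v x) + a * v x
          + ∑ j, (2 * x j * pd j v x + v x))]

/-- `exp (c |x|²)`. -/
noncomputable def gw (n : ℕ) (c : ℝ) (x : EE n) : ℝ := Real.exp (c * ‖x‖ ^ 2)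

lemma smooth_gw (c : ℝ) : ContDiff ℝ ∞ (gw n c) := by
  unfold gw
  exact (contDiff_const.mul (contDiff_norm_sq ℝ)).exp

lemma gw_mul (c d : ℝ) (x : EE n) : gw n c x * gw n d x = gw n (c + d) x := by
  unfold gw
  rw [← Real.exp_add]
  ring_nf

lemma gw_zero (x : EE n) : gw n 0 x = 1 := by simp [gw]

lemma gw_sq_neg (x : EE n) : gw n (-(1 / 2)) x ^ 2 = Real.exp (-‖x‖ ^ 2) := by
  rw [sq, gw_mul, gw]
  norm_num

lemma pd_gw (c : ℝ) (i : Fin n) (x : EE n) : pd i (gw n c) x = 2 * c * x i * gw n c x := by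
  have h : HasFDerivAt (gw n c) (gw n c x • (c • ((2 : ℕ) • innerSL ℝ x))) x := by
    have := ((hasStrictFDerivAt_norm_sq x).hasFDerivAt.const_mul c).exp
    exact this
  unfold pd
  rw [h.fderiv]
  simp [EuclideanSpace.inner_single_right]
  ring

lemma lap_gw_mul {v : EE n → ℝ} (hv : TF v) (a : ℝ) (x : EE n) :
    lap (fun y => gw n (-(1 / 2)) y * v y) x + a * (gw n (-(1 / 2)) x * v x)
      = gw n (-(1 / 2)) x * (∑ i, (pd i (pd i v) x + x i ^ 2 * v x) + a * v x
      - ∑ j, (2 * x j * pd j v x + v x)) := by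
  have key : ∀ (i : Fin n) {w : EE n → ℝ}, TF w → pd i (fun y => gw n (-(1 / 2)) y * w y)
      = fun y => gw n (-(1 / 2)) y * (pd i w y - y i * w y) := by
    intro i w hw
    funext y
    rw [pd_mul i ((smooth_gw _).differentiable (by simp) y) (hw.diff y), pd_gw]
    ring
  have hl : lap (fun y => gw n (-(1 / 2)) y * v y) x
      = ∑ i, pd i (pd i (fun y => gw n (-(1 / 2)) y * v y)) x := rfl
  have hi : ∀ i, pd i (pd i (fun y => gw n (-(1 / 2)) y * v y)) x
      = gw n (-(1 / 2)) x * ((pd i (pd i v) x + x i ^ 2 * v x)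
        - (2 * x i * pd i v x + v x)) := by
    intro i
    have hxv : TF (fun y => y i * v y) := hv.mul (smooth_coord i)
    rw [key i hv, key i (TF.sub (hv.pd i) hxv)]
    have : pd i (fun y => pd i v y - y i * v y) x = pd i (pd i v) x - (v x + x i * pd i v x) := by
      have h1 : pd i (fun y => pd i v y - y i * v y) x
          = pd i (pd i v) x - pd i (fun y => y i * v y) x := by
        change fderiv ℝ _ x _ = fderiv ℝ _ x _ - fderiv ℝ _ x _
        rw [fderiv_fun_sub ((hv.pd i).diff x) (hxv.diff x)]
        simp
      rw [h1, pd_mul i (diff_coord i x) (hv.diff x), pd_coord]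
      simp
    simp only [this]
    ring
  rw [hl, Finset.sum_congr rfl fun i _ => hi i, ← Finset.mul_sum, Finset.sum_sub_distrib]
  ring

lemma TF.lap {ψ : EE n → ℝ} (h : TF ψ) : TF (_root_.lap ψ) :=
  TF.sum fun i => (h.pd i).pd i

lemma main_ineq' {ψ : EE n → ℝ} (h : TF ψ) (a : ℝ) :
    8 * n * ∫ x, (gw n (1 / 2) x * ψ x) ^ 2
      ≤ ∫ x, (gw n (1 / 2) x * (lap ψ x + a * ψ x)) ^ 2 := by
  have hv : TF (fun x => gw n (1 / 2) x * ψ x) := h.mul (smooth_gw _)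
  have hψ : (fun y => gw n (-(1 / 2)) y * (gw n (1 / 2) y * ψ y)) = ψ := by
    funext y
    rw [← mul_assoc, gw_mul, neg_add_cancel, gw_zero, one_mul]
  refine (main_ineq hv a).trans_eq ?_
  congr 1
  funext x
  congr 1
  have := lap_gw_mul hv a x
  rw [hψ, congrFun hψ x] at this
  rw [this, ← mul_assoc (gw n (1 / 2) x) (gw n (-(1 / 2)) x), gw_mul, add_neg_cancel, gw_zero,
    one_mul]

end calc_lemmas

lemma abstract_riesz {E H : Type*} [AddCommGroup E] [Module ℝ E] [NormedAddCommGroup H]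
    [InnerProductSpace ℝ H] [CompleteSpace H] (T B : E →ₗ[ℝ] H) (g : H) (c : ℝ) (hc : 0 < c)
    (h : ∀ e, c * ‖B e‖ ^ 2 ≤ ‖T e‖ ^ 2) :
    ∃ U : H, (∀ e, inner ℝ U (T e) = inner ℝ g (B e)) ∧ c * ‖U‖ ^ 2 ≤ ‖g‖ ^ 2 := by
  obtain ⟨s, hs⟩ := T.rangeRestrict.exists_rightInverse_of_surjective T.range_rangeRestrict
  have hs' : ∀ y : LinearMap.range T, T (s y) = y := fun y =>
    congrArg Subtype.val (LinearMap.congr_fun hs y)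
  have hB : ∀ e, ‖B e‖ ≤ (√c)⁻¹ * ‖T e‖ := by
    intro e
    have hsc : 0 < √c := Real.sqrt_pos.2 hc
    rw [← div_eq_inv_mul, le_div_iff₀ hsc]
    refine le_of_sq_le_sq ?_ (norm_nonneg _)
    rw [mul_pow, Real.sq_sqrt hc.le, mul_comm]
    exact h e
  let ℓ : LinearMap.range T →ₗ[ℝ] ℝ := (innerSL ℝ g).toLinearMap ∘ₗ B ∘ₗ s
  have hℓ : ∀ y, ‖ℓ y‖ ≤ (‖g‖ * (√c)⁻¹) * ‖y‖ := by
    intro y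
    calc ‖ℓ y‖ = ‖inner ℝ g (B (s y))‖ := rfl
      _ ≤ ‖g‖ * ‖B (s y)‖ := norm_inner_le_norm _ _
      _ ≤ ‖g‖ * ((√c)⁻¹ * ‖T (s y)‖) := by gcongr; exact hB _
      _ = _ := by rw [hs']; simp; ring
  obtain ⟨L, hL, hLn⟩ := exists_extension_norm_eq (LinearMap.range T) (ℓ.mkContinuous _ hℓ)
  refine ⟨(InnerProductSpace.toDual ℝ H).symm L, fun e => ?_, ?_⟩
  · rw [InnerProductSpace.toDual_symm_apply]
    have h1 := hL ⟨T e, e, rfl⟩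
    simp only at h1
    rw [h1]
    change inner ℝ g (B (s ⟨T e, e, rfl⟩)) = _
    congr 1
    have h2 := hB (s ⟨T e, e, rfl⟩ - e)
    rw [map_sub, map_sub, hs', sub_self, norm_zero, mul_zero] at h2
    exact sub_eq_zero.1 (norm_le_zero_iff.1 h2)
  · rw [LinearIsometryEquiv.norm_map, hLn]
    have h3 : ‖ℓ.mkContinuous _ hℓ‖ ≤ ‖g‖ * (√c)⁻¹ :=
      LinearMap.mkContinuous_norm_le _ (by positivity) _
    calc c * ‖ℓ.mkContinuous _ hℓ‖ ^ 2 ≤ c * (‖g‖ * (√c)⁻¹) ^ 2 := by gcongr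
      _ = ‖g‖ ^ 2 := by
        rw [mul_pow, inv_pow, Real.sq_sqrt hc.le]
        field_simp

/-- The space of test functions. -/
def TFS (n : ℕ) : Submodule ℝ (EE n → ℝ) where
  carrier := {v | TF v}
  add_mem' := fun ha hb => TF.add ha hb
  zero_mem' := TF.zero
  smul_mem' := fun c _ hv => TF.mul hv (g := fun _ => c) contDiff_const

lemma TF.memLp {n : ℕ} {v : EE n → ℝ} (h : TF v) : MemLp v 2 volume :=
  h.1.continuous.memLp_of_hasCompactSupport h.2

lemma lap_add {n : ℕ} {v w : EE n → ℝ} (hv : TF v) (hw : TF w) (x : EE n) :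
    lap (v + w) x = lap v x + lap w x := by
  have h : ∀ i, pd i (v + w) = fun x => pd i v x + pd i w x := fun i =>
    funext fun x => pd_add i (hv.diff x) (hw.diff x)
  change ∑ i, pd i (pd i (v + w)) x = ∑ i, pd i (pd i v) x + ∑ i, pd i (pd i w) x
  rw [← Finset.sum_add_distrib]
  refine Finset.sum_congr rfl fun i _ => ?_
  rw [h, pd_add i ((hv.pd i).diff x) ((hw.pd i).diff x)]

lemma lap_smul {n : ℕ} {v : EE n → ℝ} (c : ℝ) (hv : TF v) (x : EE n) :
    lap (c • v) x = c * lap v x := by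
  have h : ∀ i {w : EE n → ℝ}, TF w → pd i (fun y => c * w y) = fun x => c * pd i w x :=
    fun i w hw => funext fun x => by
      rw [pd_mul i (differentiableAt_const _) (hw.diff x), pd_const]
      simp
  change ∑ i, pd i (pd i (fun y => c * v y)) x = c * ∑ i, pd i (pd i v) x
  rw [Finset.mul_sum]
  refine Finset.sum_congr rfl fun i _ => ?_
  rw [h i hv, h i (hv.pd i)]

lemma tf_op {n : ℕ} {v : EE n → ℝ} (a : ℝ) (hv : TF v) :
    TF (fun x => gw n (1 / 2) x * (lap v x + a * v x)) :=
  TF.mul (TF.add hv.lap (hv.mul contDiff_const)) (smooth_gw _)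

/-- The operator `exp(|x|²/2) (Δ + a)`. -/
noncomputable def opT (n : ℕ) (a : ℝ) : TFS n →ₗ[ℝ] Lp ℝ 2 (volume : Measure (EE n)) where
  toFun v := (tf_op a v.2).memLp.toLp _
  map_add' v w := by
    rw [← MemLp.toLp_add]
    refine MemLp.toLp_congr _ _ (Filter.Eventually.of_forall fun x => ?_)
    have := lap_add v.2 w.2 x
    simp only [Submodule.coe_add, this, Pi.add_apply]
    ring
  map_smul' c v := by
    rw [RingHom.id_apply, ← MemLp.toLp_const_smul]
    refine MemLp.toLp_congr _ _ (Filter.Eventually.of_forall fun x => ?_)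
    have := lap_smul c v.2 x
    simp only [Submodule.coe_smul, this, Pi.smul_apply, smul_eq_mul]
    ring

/-- The operator `exp(|x|²/2)`. -/
noncomputable def opB (n : ℕ) : TFS n →ₗ[ℝ] Lp ℝ 2 (volume : Measure (EE n)) where
  toFun v := (TF.mul v.2 (smooth_gw (1 / 2))).memLp.toLp _
  map_add' v w := by
    rw [← MemLp.toLp_add]
    refine MemLp.toLp_congr _ _ (Filter.Eventually.of_forall fun x => ?_)
    simp only [Submodule.coe_add, Pi.add_apply]
    ring
  map_smul' c v := by
    rw [RingHom.id_apply, ← MemLp.toLp_const_smul]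
    refine MemLp.toLp_congr _ _ (Filter.Eventually.of_forall fun x => ?_)
    simp only [Submodule.coe_smul, Pi.smul_apply, smul_eq_mul]
    ring

lemma inner_toLp {n : ℕ} (U : Lp ℝ 2 (volume : Measure (EE n))) {g : EE n → ℝ}
    (hg : MemLp g 2 volume) : inner ℝ U (hg.toLp g) = ∫ x, U x * g x := by
  rw [L2.inner_def]
  refine integral_congr_ae ?_
  filter_upwards [hg.coeFn_toLp] with x hx
  simp [hx, mul_comm]

lemma normsq_Lp {n : ℕ} (U : Lp ℝ 2 (volume : Measure (EE n))) :
    ‖U‖ ^ 2 = ∫ x, U x ^ 2 := by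
  rw [← real_inner_self_eq_norm_sq, L2.inner_def]
  simp [sq]

lemma normsq_toLp {n : ℕ} {g : EE n → ℝ} (hg : MemLp g 2 volume) :
    ‖hg.toLp g‖ ^ 2 = ∫ x, g x ^ 2 := by
  rw [normsq_Lp]
  refine integral_congr_ae ?_
  filter_upwards [hg.coeFn_toLp] with x hx
  rw [hx]

theorem stmt0 (n : ℕ) (hn : 0 < n) (a : ℝ) (f : EuclideanSpace ℝ (Fin n) → ℝ)
    (hf : LocallyIntegrable f volume)
    (hf2 : Integrable (fun x => f x ^ 2 * Real.exp (-‖x‖ ^ 2)) volume) :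
    ∃ u : EuclideanSpace ℝ (Fin n) → ℝ,
      LocallyIntegrable u volume ∧
      Integrable (fun x => u x ^ 2 * Real.exp (-‖x‖ ^ 2)) volume ∧
      IsWeakSolution a u f ∧
      ∫ x, u x ^ 2 * Real.exp (-‖x‖ ^ 2) ≤
        (1 / (8 * n)) * ∫ x, f x ^ 2 * Real.exp (-‖x‖ ^ 2) := by
  have hn' : (0 : ℝ) < n := by exact_mod_cast hn
  have hfs : ∀ x, f x ^ 2 * Real.exp (-‖x‖ ^ 2) = (f x * gw n (-(1 / 2)) x) ^ 2 := fun x => by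
    rw [mul_pow, gw_sq_neg]
  simp only [hfs] at hf2 ⊢
  have hg : MemLp (fun x => f x * gw n (-(1 / 2)) x) 2 volume :=
    (memLp_two_iff_integrable_sq
      (hf.aestronglyMeasurable.mul (smooth_gw _).continuous.aestronglyMeasurable)).2 hf2
  obtain ⟨U, hU, hUn⟩ := abstract_riesz (opT n a) (opB n) (hg.toLp _) (8 * n) (by positivity)
    (fun e => by
      change 8 * n * ‖(TF.mul e.2 (smooth_gw (1 / 2))).memLp.toLp _‖ ^ 2
        ≤ ‖(tf_op a e.2).memLp.toLp _‖ ^ 2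
      rw [normsq_toLp, normsq_toLp]
      exact main_ineq' e.2 a)
  have hus : ∀ x, (gw n (1 / 2) x * U x) ^ 2 * Real.exp (-‖x‖ ^ 2) = U x ^ 2 := fun x => by
    rw [← gw_sq_neg, ← mul_pow, mul_right_comm, gw_mul, add_neg_cancel, gw_zero, one_mul]
  refine ⟨fun x => gw n (1 / 2) x * U x, ?_, ?_, ?_, ?_⟩
  · have h1 : LocallyIntegrable U volume := (Lp.memLp U).locallyIntegrable (by norm_num)
    have h2 := (h1.locallyIntegrableOn Set.univ).continuousOn_mul
      (smooth_gw (n := n) (1 / 2)).continuous.continuousOn isOpen_univ.isLocallyClosed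
    exact locallyIntegrableOn_univ.1 h2
  · simp only [hus]
    exact (Lp.memLp U).integrable_sq
  · intro ψ h1 h2
    have h : TF ψ := ⟨h1, h2⟩
    have h3 : inner ℝ U ((tf_op a h).memLp.toLp _)
      = inner ℝ (hg.toLp _) ((TF.mul h (smooth_gw (1 / 2))).memLp.toLp _) := hU ⟨ψ, h⟩
    rw [inner_toLp, inner_toLp] at h3
    calc _ = ∫ x, U x * (gw n (1 / 2) x * (lap ψ x + a * ψ x)) := by
          congr 1
          funext x
          ring
      _ = _ := h3
      _ = _ := by
          refine integral_congr_ae ?_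
          filter_upwards [hg.coeFn_toLp] with x hx
          rw [hx]
          have : gw n (-(1 / 2)) x * gw n (1 / 2) x = 1 := by
            rw [gw_mul, neg_add_cancel, gw_zero]
          linear_combination f x * ψ x * this
  · simp only [hus]
    rw [normsq_Lp, normsq_toLp] at hUn
    rw [one_div, ← div_eq_inv_mul, le_div_iff₀ (by positivity), mul_comm]
    exact hUn
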